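/- arXiv:1701.04834 — 2 statements merged into one kernel-verified Lean document; each statement's English description precedes it below -/
import Mathlib

section
/- Let α ∈ {0, 1, 2}, let r > 0, and let f : ℝ → ℝ be three times continuously differentiable on a neighborhood of r. Then there exist constants C > 0 and δ > 0 such that for all h with 0 < h < δ, setting r₊ = r + h/2, r₋ = r − h/2, and ΔV = (r₊^{α+1} − r₋^{α+1})/(α+1), one has | (f(r₊)·r₊^α − f(r₋)·r₋^α)/ΔV − ( f'(r) + α·f(r)/r ) | ≤ C·h². (The finite-volume divergence approximation of Method Two is a second-order accurate, but not higher-order, consistent approximation of (1/r^α)∂_r(r^α f)(r) = f'(r) + αf(r)/r.) -/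
open Topology in
theorem taylor_aux (g : ℝ → ℝ) (r : ℝ) (hg : ContDiffAt ℝ 3 g r) :
    ∃ c d : ℝ, ∃ δ > (0:ℝ), ∀ x : ℝ, |x - r| < δ →
      |g x - (g r + deriv g r * (x - r) + c * (x - r)^2 + d * (x - r)^3)| ≤ |x - r|^3 := by
  obtain ⟨u, hu, hgu⟩ := hg.contDiffOn (m := 3) le_rfl (by simp)
  obtain ⟨ε, hε, hsub⟩ := Metric.mem_nhds_iff.1 hu
  have hs := hgu.mono hsub
  have hmem : r ∈ Metric.ball r ε := Metric.mem_ball_self hε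
  have h := taylor_isLittleO (n := 3) (convex_ball r ε) hmem hs
  rw [(Metric.isOpen_ball).nhdsWithin_eq hmem] at h
  have h1 := h.bound (c := 1) one_pos
  obtain ⟨δ, hδ, h2⟩ := Metric.eventually_nhds_iff.1 h1
  refine ⟨(1/2) * iteratedDerivWithin 2 g (Metric.ball r ε) r,
    (1/6) * iteratedDerivWithin 3 g (Metric.ball r ε) r, δ, hδ, fun x hx => ?_⟩
  have h3 := h2 (y := x) (by rwa [Real.dist_eq])
  have hd : derivWithin g (Metric.ball r ε) r = deriv g r :=
    derivWithin_of_isOpen Metric.isOpen_ball hmem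
  simp only [taylorWithinEval_succ, taylor_within_zero_eval, iteratedDerivWithin_one, hd,
    zero_add, Real.norm_eq_abs, abs_pow, one_mul, smul_eq_mul] at h3
  norm_num [Nat.factorial] at h3
  convert h3 using 2
  ring

theorem central_aux (g : ℝ → ℝ) (r : ℝ) (hg : ContDiffAt ℝ 3 g r) :
    ∃ M > (0:ℝ), ∃ δ > (0:ℝ), ∀ k : ℝ, 0 < k → k < δ →
      |g (r + k) - g (r - k) - 2 * k * deriv g r| ≤ M * k^3 := by
  obtain ⟨c, d, δ, hδ, H⟩ := taylor_aux g r hg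
  refine ⟨2 * |d| + 2, by positivity, δ, hδ, fun k hk hkδ => ?_⟩
  have h1 := H (r + k) (by simpa [abs_of_pos hk] using hkδ)
  have h2 := H (r - k) (by simpa [abs_of_pos hk] using hkδ)
  have e1 : r + k - r = k := by ring
  have e2 : r - k - r = -k := by ring
  rw [e1, abs_of_pos hk] at h1
  rw [e2, abs_neg, abs_of_pos hk] at h2
  have hk3 : 0 < k^3 := by positivity
  have h3 := mul_le_mul_of_nonneg_right (le_abs_self d) hk3.le
  have h4 := mul_le_mul_of_nonneg_right (neg_abs_le d) hk3.le
  rw [abs_le] at *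
  constructor <;> nlinarith

theorem quot_aux (N k P e D M : ℝ) (hk : 0 < k) (hP : 0 < P) (he : 0 ≤ e) (hek : e ≤ k^2)
    (hN : |N - 2 * k * (P * D)| ≤ M * k^3) :
    |N / (2 * k * (P + e)) - D| ≤ ((M + 2 * |D|) / P) * (2 * k)^2 := by
  have hV : 0 < 2 * k * (P + e) := by positivity
  have hM : 0 ≤ M * k^3 := (abs_nonneg _).trans hN
  have hM' : 0 ≤ M := nonneg_of_mul_nonneg_left hM (by positivity)
  have e1 : N / (2 * k * (P + e)) - D
      = ((N - 2 * k * (P * D)) - 2 * k * D * e) / (2 * k * (P + e)) := by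
    field_simp; ring
  rw [e1, abs_div, abs_of_pos hV, div_le_iff₀ hV]
  have h1 : |2 * k * D * e| ≤ 2 * k * |D| * k^2 := by
    rw [abs_mul, abs_mul, abs_of_nonneg he, abs_of_pos (by positivity : 0 < 2 * k)]
    gcongr
  have h2 := abs_sub (N - 2 * k * (P * D)) (2 * k * D * e)
  calc _ ≤ M * k^3 + 2 * k * |D| * k^2 := by linarith
    _ ≤ (M + 2 * |D|) * (2*k)^2 * (2 * k) := by
      have : 0 ≤ |D| * k^3 := by positivity
      nlinarith
    _ = ((M + 2 * |D|) / P) * (2 * k)^2 * (2 * k * P) := by field_simp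
    _ ≤ _ := by gcongr; linarith

/-- The finite-volume divergence approximation of Method Two is a second-order accurate
consistent approximation of `(1/r^α) ∂_r(r^α f)(r) = f'(r) + α f(r)/r`. -/
theorem stmt_1 (α : ℕ) (hα : α = 0 ∨ α = 1 ∨ α = 2) (r : ℝ) (hr : 0 < r)
    (f : ℝ → ℝ) (hf : ContDiffAt ℝ 3 f r) :
    ∃ C > (0:ℝ), ∃ δ > (0:ℝ), ∀ h : ℝ, 0 < h → h < δ →
      |(f (r + h/2) * (r + h/2) ^ α - f (r - h/2) * (r - h/2) ^ α) /
          (((r + h/2) ^ (α + 1) - (r - h/2) ^ (α + 1)) / ((α : ℝ) + 1))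
        - (deriv f r + (α : ℝ) * f r / r)| ≤ C * h ^ 2 := by
  have hg : ContDiffAt ℝ 3 (fun x => f x * x ^ α) r := hf.mul (contDiffAt_id.pow α)
  have hd : deriv (fun x => f x * x ^ α) r = r ^ α * (deriv f r + (α : ℝ) * f r / r) := by
    have h1 := (hf.differentiableAt (by norm_num)).hasDerivAt.fun_mul (hasDerivAt_pow α r)
    rw [h1.deriv]
    rcases hα with rfl | rfl | rfl <;> simp <;> field_simp
  obtain ⟨M, hM, δ, hδ, H⟩ := central_aux _ r hg
  refine ⟨(M + 2 * |deriv f r + (α : ℝ) * f r / r|) / r ^ α, by positivity, 2 * δ, by positivity,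
    fun h hh hhδ => ?_⟩
  have h1 := H (h/2) (by positivity) (by linarith)
  rw [hd] at h1
  have hV : ∃ e : ℝ, 0 ≤ e ∧ e ≤ (h/2)^2 ∧
      ((r + h/2) ^ (α + 1) - (r - h/2) ^ (α + 1)) / ((α : ℝ) + 1)
        = 2 * (h/2) * (r ^ α + e) := by
    have := sq_nonneg (h/2)
    rcases hα with rfl | rfl | rfl
    · exact ⟨0, le_rfl, this, by norm_num; ring⟩
    · exact ⟨0, le_rfl, this, by norm_num; ring⟩
    · exact ⟨(h/2)^2/3, by positivity, by linarith, by norm_num; ring⟩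
  obtain ⟨e, he, hek, hVe⟩ := hV
  rw [hVe]
  have h2 := quot_aux _ (h/2) (r ^ α) e _ M (by positivity) (by positivity) he hek h1
  rwa [mul_div_cancel₀ h (two_ne_zero)] at h2 ⊢
end

section
/- Let f : ℝ → ℝ be six times continuously differentiable on a neighborhood of a point x, and let f̂(y; h) = (1/30) f(y − 2h) − (13/60) f(y − h) + (47/60) f(y) + (9/20) f(y + h) − (1/20) f(y + 2h). Then there exist constants C > 0 and δ > 0 such that for all 0 < h < δ, | ( f̂(x; h) − f̂(x − h; h) )/h − f'(x) | ≤ C·h⁵. (The linear combination of the three third-order WENO candidate fluxes with the linear weights γ₁ = 1/10, γ₂ = 3/5, γ₃ = 3/10 yields a fifth-order accurate approximation of the derivative.) -/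
lemma taylor_aux_s8 (f : ℝ → ℝ) (x : ℝ) (hf : ContDiffAt ℝ 6 f x) :
    ∃ a2 a3 a4 a5 a6 : ℝ, ∃ ε > (0:ℝ), ∀ t : ℝ, |t| < ε →
      |f (x + t) - (f x + deriv f x * t + a2 * t^2 + a3 * t^3 + a4 * t^4 + a5 * t^5 + a6 * t^6)|
        ≤ |t| ^ 6 := by
  obtain ⟨u, hu, hfu⟩ := hf.contDiffOn (m := 6) le_rfl (by simp)
  obtain ⟨r, hr, hru⟩ := Metric.mem_nhds_iff.1 hu
  have hs : Metric.ball x r ∈ nhds x := Metric.ball_mem_nhds x hr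
  have h1 := taylor_isLittleO (n := 6) (convex_ball x r) (Metric.mem_ball_self hr)
    (by exact_mod_cast hfu.mono hru)
  rw [nhdsWithin_eq_nhds.2 hs] at h1
  have h2 := h1.bound (c := 1) one_pos
  obtain ⟨ε, hε, h3⟩ := Metric.eventually_nhds_iff.1 h2
  have hd : iteratedDerivWithin 1 f (Metric.ball x r) x = deriv f x := by
    rw [iteratedDerivWithin_one, derivWithin_of_mem_nhds hs]
  refine ⟨(2:ℝ)⁻¹ * iteratedDerivWithin 2 f (Metric.ball x r) x,
    (6:ℝ)⁻¹ * iteratedDerivWithin 3 f (Metric.ball x r) x,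
    (24:ℝ)⁻¹ * iteratedDerivWithin 4 f (Metric.ball x r) x,
    (120:ℝ)⁻¹ * iteratedDerivWithin 5 f (Metric.ball x r) x,
    (720:ℝ)⁻¹ * iteratedDerivWithin 6 f (Metric.ball x r) x, ε, hε, fun t ht => ?_⟩
  have h4 := h3 (y := x + t) (by simpa [Real.dist_eq] using ht)
  rw [taylor_within_apply] at h4
  simp only [Finset.sum_range_succ, Finset.sum_range_zero, hd, iteratedDerivWithin_zero,
    Nat.factorial, Real.norm_eq_abs, abs_pow, add_sub_cancel_left, smul_eq_mul, one_mul] at h4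
  convert h4 using 2
  push_cast
  ring

/-- The convex combination of the three third-order WENO candidate fluxes with the
linear weights `γ₁ = 1/10, γ₂ = 3/5, γ₃ = 3/10` yields a fifth-order accurate
approximation of the derivative. -/
theorem stmt_8 (f : ℝ → ℝ) (x : ℝ) (hf : ContDiffAt ℝ 6 f x) :
    ∃ C > (0:ℝ), ∃ δ > (0:ℝ), ∀ h : ℝ, 0 < h → h < δ →
      let fhat : ℝ → ℝ := fun y =>
        (1/30) * f (y - 2*h) - (13/60) * f (y - h) + (47/60) * f y
          + (9/20) * f (y + h) - (1/20) * f (y + 2*h)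
      |(fhat x - fhat (x - h)) / h - deriv f x| ≤ C * h ^ 5 := by
  obtain ⟨a2, a3, a4, a5, a6, ε, hε, H⟩ := taylor_aux_s8 f x hf
  refine ⟨45 + 12 * |a6|, by positivity, ε / 3, by positivity, fun h h0 hd => ?_⟩
  have key : ∀ c : ℝ, |c| ≤ 3 → |f (x + c * h) - (f x + deriv f x * (c * h) + a2 * (c * h)^2
      + a3 * (c * h)^3 + a4 * (c * h)^4 + a5 * (c * h)^5 + a6 * (c * h)^6)| ≤ |c| ^ 6 * h ^ 6 := by
    intro c hc
    have := H (c * h) (by rw [abs_mul, abs_of_pos h0]; nlinarith)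
    rwa [abs_mul, abs_of_pos h0, mul_pow |c|] at this
  have k1 := abs_le.1 (key (-3) (by norm_num))
  have k2 := abs_le.1 (key (-2) (by norm_num))
  have k3 := abs_le.1 (key (-1) (by norm_num))
  have k4 := abs_le.1 (key 1 (by norm_num))
  have k5 := abs_le.1 (key 2 (by norm_num))
  norm_num only [abs_neg, abs_one, Nat.abs_ofNat] at k1 k2 k3 k4 k5
  intro fhat
  have e : fhat x - fhat (x - h) = -(1/30) * f (x + (-3) * h) + (1/4) * f (x + (-2) * h)
      - f (x + (-1) * h) + (1/3) * f x + (1/2) * f (x + 1 * h) - (1/20) * f (x + 2 * h) := by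
    simp only [fhat]
    rw [show x - h - 2 * h = x + (-3) * h by ring, show x - h - h = x + (-2) * h by ring,
      show x - 2 * h = x + (-2) * h by ring, show x - h + h = x by ring,
      show x - h + 2 * h = x + 1 * h by ring, show x - h = x + (-1) * h by ring,
      show x + h = x + 1 * h by ring]
    ring
  have e2 : (fhat x - fhat (x - h)) / h - deriv f x
      = (fhat x - fhat (x - h) - deriv f x * h) / h := by field_simp
  rw [e2, abs_div, abs_of_pos h0, div_le_iff₀ h0, e]
  have b1 : a6 * h ^ 6 ≤ |a6| * h ^ 6 := by gcongr; exact le_abs_self _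
  have b2 : -(|a6| * h ^ 6) ≤ a6 * h ^ 6 := by
    rw [← neg_mul]; gcongr; exact neg_abs_le _
  have h6 : 0 < h ^ 6 := by positivity
  simp only [one_mul] at k4 ⊢
  generalize f (x + (-3) * h) = F1 at *
  generalize f (x + (-2) * h) = F2 at *
  generalize f (x + (-1) * h) = F3 at *
  generalize f (x + h) = F4 at *
  generalize f (x + 2 * h) = F5 at *
  rw [abs_le]
  constructor <;> linarith [k1.1, k1.2, k2.1, k2.2, k3.1, k3.2, k4.1, k4.2, k5.1, k5.2]
end
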